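/- arXiv:2505.08021 — 3 statements merged into one kernel-verified Lean document; each statement's English description precedes it below -/
import Mathlib

section
/- Every GNN classifier N in GNN_s^AC with L layers is invariant under ∼_{L,1}: if (G1,v1) ∼_{L,1} (G2,v2) for pointed graphs (G1,v1) and (G2,v2), then N(G1,v1) = N(G2,v2). -/
/-!
The label of a node after `ℓ` layers is determined by its `∼_{ℓ,1}`-class; this is proved by
induction on `ℓ` (`GNN.labelAt_eq_of_gBisim`). In the step, the forth and back conditions for
singletons say that the two nodes see the same set of `∼_{ℓ,1}`-classes among their neighbours,
hence by induction the same set of labels. A set-based aggregation function depends only on this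
set (`KBounded.eq_of_mem_iff`), and the previous label of the node itself agrees because
`∼_{ℓ+1,1}` refines `∼_{ℓ,1}` (`GBisim.of_succ`).
-/

attribute [local instance] Classical.propDecidable

noncomputable section

/-! ## Multisets with capped multiplicities, and bounded aggregation functions -/

/-- The multiset obtained from `M` by replacing every multiplicity greater than `k` by `k`. -/
def Multiset.capAt {α : Type*} (k : ℕ) (M : Multiset α) : Multiset α :=
  haveI := Classical.decEq α
  M.toFinset.val.bind fun a => Multiset.replicate (min (M.count a) k) a

/-- A function on multisets is `k`-bounded if its value on any multiset agrees with its value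
on the multiset with all multiplicities capped at `k`. -/
def KBounded {α β : Type*} (k : ℕ) (f : Multiset α → β) : Prop :=
  ∀ M : Multiset α, f M = f (M.capAt k)

/-- A function on multisets is bounded if it is `k`-bounded for some `k`;
it is set-based if it is `1`-bounded. -/
def BoundedAgg {α β : Type*} (f : Multiset α → β) : Prop :=
  ∃ k : ℕ, KBounded k f

/-! ## Finite undirected simple node-labelled graphs -/

structure LGraph (d : ℕ) where
  n : ℕ
  adj : Fin n → Fin n → Prop
  symm : ∀ u v, adj u v → adj v u
  irrefl : ∀ v, ¬ adj v v
  label : Fin n → Fin d → Bool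

/-- The neighbours of a node. -/
def LGraph.nbrs {d : ℕ} (G : LGraph d) (v : Fin G.n) : Finset (Fin G.n) :=
  Finset.univ.filter fun w => G.adj v w

/-- The non-neighbours of a node (excluding the node itself). -/
def LGraph.conbrs {d : ℕ} (G : LGraph d) (v : Fin G.n) : Finset (Fin G.n) :=
  Finset.univ.filter fun w => ¬ G.adj v w ∧ w ≠ v

/-! ## GNN classifiers -/

/-- The kind of the layers of a GNN: aggregate-combine (`AC`),
aggregate-combine-readout (`ACR`), or extended aggregate-combine (`ACP`, i.e. `AC+`). -/
inductive GNNKind : Type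
  | AC | ACR | ACP

/-- A GNN layer from dimension `din` to dimension `dout`: an aggregation function `agg`
(over neighbours), an auxiliary aggregation/readout function `aux` (fed the empty multiset in
`AC` layers, the multiset of all node labels in `ACR` layers, and the multiset of labels of
non-neighbours in `AC+` layers), and a combination function `comb`. -/
structure GNNLayer (din dout : ℕ) where
  m₁ : ℕ
  m₂ : ℕ
  agg : Multiset (Fin din → ℝ) → Fin m₁ → ℝ
  aux : Multiset (Fin din → ℝ) → Fin m₂ → ℝ
  comb : (Fin din → ℝ) → (Fin m₁ → ℝ) → (Fin m₂ → ℝ) → Fin dout → ℝ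

/-- A GNN classifier of dimension `d` with `L` layers of matching dimensions and a
classification function `cls`. -/
structure GNN (d : ℕ) where
  kind : GNNKind
  L : ℕ
  dims : ℕ → ℕ
  dims_zero : dims 0 = d
  layer : (ℓ : ℕ) → ℓ < L → GNNLayer (dims ℓ) (dims (ℓ + 1))
  cls : (Fin (dims L) → ℝ) → Bool

/-- The set of nodes whose labels are fed to the second aggregation function `aux`. -/
def GNN.auxSet {d : ℕ} (N : GNN d) (G : LGraph d) (v : Fin G.n) : Finset (Fin G.n) :=
  match N.kind with
  | GNNKind.AC => ∅
  | GNNKind.ACR => Finset.univ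
  | GNNKind.ACP => G.conbrs v

/-- The labelling of the nodes of `G` after `ℓ` layers of `N` have been applied. -/
def GNN.labelAt {d : ℕ} (N : GNN d) (G : LGraph d) : (ℓ : ℕ) → Fin G.n → Fin (N.dims ℓ) → ℝ
  | 0 => fun v i => if G.label v (Fin.cast N.dims_zero i) = true then 1 else 0
  | ℓ + 1 => fun v =>
      if h : ℓ < N.L then
        (N.layer ℓ h).comb (N.labelAt G ℓ v)
          ((N.layer ℓ h).agg ((G.nbrs v).val.map fun w => N.labelAt G ℓ w))
          ((N.layer ℓ h).aux ((N.auxSet G v).val.map fun w => N.labelAt G ℓ w))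
      else fun _ => 0

/-- The output of the GNN classifier `N` on the pointed graph `(G, v)`. -/
def GNN.eval {d : ℕ} (N : GNN d) (G : LGraph d) (v : Fin G.n) : Bool :=
  N.cls (N.labelAt G N.L v)

/-- The spectrum of `N` at layer `ℓ`: by convention, at layer `0` it is the set of Boolean
vectors of the dimension of `N`; at layer `ℓ + 1` it is the set of vectors that can occur as
node labels upon application of layer `ℓ + 1` in applications of `N` to graphs. -/
def GNN.spec {d : ℕ} (N : GNN d) : (ℓ : ℕ) → Set (Fin (N.dims ℓ) → ℝ)
  | 0 => {x | ∀ i, x i = 0 ∨ x i = 1}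
  | ℓ + 1 => {x | ∃ (G : LGraph d) (v : Fin G.n), N.labelAt G (ℓ + 1) v = x}

/-! ## Modal formulas (GMLC and its fragments GML, ML(E), ML) -/

inductive MForm (d : ℕ) : Type
  | prop : Fin d → MForm d
  | neg : MForm d → MForm d
  | and : MForm d → MForm d → MForm d
  | dia : ℕ → MForm d → MForm d
  | glob : ℕ → MForm d → MForm d

namespace MForm

/-- Modal depth. -/
def depth {d : ℕ} : MForm d → ℕ
  | prop _ => 0
  | neg φ => depth φ
  | and φ ψ => max (depth φ) (depth ψ)
  | dia _ φ => depth φ + 1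
  | glob _ φ => depth φ + 1

/-- Counting rank. -/
def rank {d : ℕ} : MForm d → ℕ
  | prop _ => 0
  | neg φ => rank φ
  | and φ ψ => max (rank φ) (rank ψ)
  | dia k φ => max k (rank φ)
  | glob k φ => max k (rank φ)

/-- Graded modal logic: no global modalities, grades are positive. -/
def IsGML {d : ℕ} : MForm d → Prop
  | prop _ => True
  | neg φ => IsGML φ
  | and φ ψ => IsGML φ ∧ IsGML ψ
  | dia k φ => 1 ≤ k ∧ IsGML φ
  | glob _ _ => False

/-- Basic modal logic: no global modalities, all graded modalities are `◇₁`. -/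
def IsML {d : ℕ} : MForm d → Prop
  | prop _ => True
  | neg φ => IsML φ
  | and φ ψ => IsML φ ∧ IsML ψ
  | dia k φ => k = 1 ∧ IsML φ
  | glob _ _ => False

/-- Graded modal logic with counting: grades are positive. -/
def IsGMLC {d : ℕ} : MForm d → Prop
  | prop _ => True
  | neg φ => IsGMLC φ
  | and φ ψ => IsGMLC φ ∧ IsGMLC ψ
  | dia k φ => 1 ≤ k ∧ IsGMLC φ
  | glob k φ => 1 ≤ k ∧ IsGMLC φ

/-- Modal logic with the global modality: all modalities are `◇₁` or `∃₁`. -/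
def IsMLE {d : ℕ} : MForm d → Prop
  | prop _ => True
  | neg φ => IsMLE φ
  | and φ ψ => IsMLE φ ∧ IsMLE ψ
  | dia k φ => k = 1 ∧ IsMLE φ
  | glob k φ => k = 1 ∧ IsMLE φ

/-- A tautology (needs a proposition to exist). -/
def top {d : ℕ} (hd : 0 < d) : MForm d :=
  neg (and (prop ⟨0, hd⟩) (neg (prop ⟨0, hd⟩)))

/-- Conjunction of a list of formulas (the empty conjunction is a tautology). -/
def conjList {d : ℕ} (hd : 0 < d) : List (MForm d) → MForm d
  | [] => top hd
  | [φ] => φ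
  | φ :: ψ :: rest => and φ (conjList hd (ψ :: rest))

end MForm

/-! ## Finite pointed Kripke models -/

structure KModel (d : ℕ) where
  W : Type
  fintype : Fintype W
  R : W → W → Prop
  symm : ∀ u v, R u v → R v u
  irrefl : ∀ v, ¬ R v v
  val : W → Fin d → Prop

/-- Satisfaction of modal formulas. -/
def KModel.sat {d : ℕ} (M : KModel d) : M.W → MForm d → Prop
  | v, MForm.prop p => M.val v p
  | v, MForm.neg φ => ¬ M.sat v φ
  | v, MForm.and φ ψ => M.sat v φ ∧ M.sat v ψ
  | v, MForm.dia k φ => k ≤ Nat.card {w : M.W // M.R v w ∧ M.sat w φ}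
  | v, MForm.glob k φ => k ≤ Nat.card {w : M.W // M.sat w φ}

/-- A list enumerating the worlds of a finite Kripke model. -/
def KModel.worldList {d : ℕ} (M : KModel d) : List M.W :=
  haveI := M.fintype
  Finset.univ.toList

/-- The Kripke model associated with a node-labelled graph. -/
def LGraph.toKModel {d : ℕ} (G : LGraph d) : KModel d where
  W := Fin G.n
  fintype := inferInstance
  R := G.adj
  symm := G.symm
  irrefl := G.irrefl
  val := fun v p => G.label v p = true

/-! ## Graded bisimulation games -/

/-- `GBisim c ℓ M v M' v'` holds iff Duplicator has a winning strategy in the `ℓ`-round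
`c`-graded bisimulation game starting from configuration `(M, v, M', v')`. -/
def GBisim {d : ℕ} (c : ℕ) : (ℓ : ℕ) → (M : KModel d) → M.W → (M' : KModel d) → M'.W → Prop
  | 0, M, v, M', v' => ∀ p, M.val v p ↔ M'.val v' p
  | ℓ + 1, M, v, M', v' =>
      (∀ p, M.val v p ↔ M'.val v' p) ∧
      (∀ U₁ : Finset M.W, U₁.Nonempty → U₁.card ≤ c → (∀ u ∈ U₁, M.R v u) →
        ∃ U₂ : Finset M'.W, U₂.card = U₁.card ∧ (∀ u ∈ U₂, M'.R v' u) ∧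
          ∀ u₂ ∈ U₂, ∃ u₁ ∈ U₁, GBisim c ℓ M u₁ M' u₂) ∧
      (∀ U₁ : Finset M'.W, U₁.Nonempty → U₁.card ≤ c → (∀ u ∈ U₁, M'.R v' u) →
        ∃ U₂ : Finset M.W, U₂.card = U₁.card ∧ (∀ u ∈ U₂, M.R v u) ∧
          ∀ u₂ ∈ U₂, ∃ u₁ ∈ U₁, GBisim c ℓ M u₂ M' u₁)

/-- `GBisimG c ℓ M v M' v'` holds iff Duplicator has a winning strategy in the `ℓ`-round
`c`-graded *global* bisimulation game starting from configuration `(M, v, M', v')`: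
Spoiler may additionally play global rounds, selecting worlds anywhere in one model. -/
def GBisimG {d : ℕ} (c : ℕ) : (ℓ : ℕ) → (M : KModel d) → M.W → (M' : KModel d) → M'.W → Prop
  | 0, M, v, M', v' => ∀ p, M.val v p ↔ M'.val v' p
  | ℓ + 1, M, v, M', v' =>
      (∀ p, M.val v p ↔ M'.val v' p) ∧
      (∀ U₁ : Finset M.W, U₁.Nonempty → U₁.card ≤ c → (∀ u ∈ U₁, M.R v u) →
        ∃ U₂ : Finset M'.W, U₂.card = U₁.card ∧ (∀ u ∈ U₂, M'.R v' u) ∧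
          ∀ u₂ ∈ U₂, ∃ u₁ ∈ U₁, GBisimG c ℓ M u₁ M' u₂) ∧
      (∀ U₁ : Finset M'.W, U₁.Nonempty → U₁.card ≤ c → (∀ u ∈ U₁, M'.R v' u) →
        ∃ U₂ : Finset M.W, U₂.card = U₁.card ∧ (∀ u ∈ U₂, M.R v u) ∧
          ∀ u₂ ∈ U₂, ∃ u₁ ∈ U₁, GBisimG c ℓ M u₂ M' u₁) ∧
      (∀ U₁ : Finset M.W, U₁.Nonempty → U₁.card ≤ c →
        ∃ U₂ : Finset M'.W, U₂.card = U₁.card ∧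
          ∀ u₂ ∈ U₂, ∃ u₁ ∈ U₁, GBisimG c ℓ M u₁ M' u₂) ∧
      (∀ U₁ : Finset M'.W, U₁.Nonempty → U₁.card ≤ c →
        ∃ U₂ : Finset M.W, U₂.card = U₁.card ∧
          ∀ u₂ ∈ U₂, ∃ u₁ ∈ U₁, GBisimG c ℓ M u₂ M' u₁)

/-! ## Characteristic formulas -/

/-- The conjunction of all propositions true at `v` and of the negations of all
propositions false at `v`. -/
def atomDesc {d : ℕ} (hd : 0 < d) (M : KModel d) (v : M.W) : MForm d :=
  MForm.conjList hd ((List.finRange d).map fun p =>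
    if M.val v p then MForm.prop p else MForm.neg (MForm.prop p))

/-- `|U^n_{v,w}|`: the number of neighbours `u` of `v` with `(M,u) ∼_{n,c} (M,w)`. -/
def USet {d : ℕ} (c n : ℕ) (M : KModel d) (v w : M.W) : ℕ :=
  Nat.card {u : M.W // M.R v u ∧ GBisim c n M u M w}

/-- The characteristic formula `φ^{ℓ,c}_{[M,v]}` of a finite pointed Kripke model for GML. -/
def charF {d : ℕ} (hd : 0 < d) (c : ℕ) (M : KModel d) : ℕ → M.W → MForm d
  | 0, v => atomDesc hd M v
  | n + 1, v =>
      MForm.conjList hd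
        ([atomDesc hd M v] ++
         ((M.worldList.filter fun w => decide (M.R v w)).flatMap fun w =>
            ((List.range c).map (· + 1)).filterMap fun k =>
              if k ≤ min (USet c n M v w) c then some (MForm.dia k (charF hd c M n w))
              else none) ++
         ((M.worldList.filter fun w => decide (M.R v w)).flatMap fun w =>
            ((List.range c).map (· + 1)).filterMap fun k =>
              if USet c n M v w < k ∧ k ≤ c then
                some (MForm.neg (MForm.dia k (charF hd c M n w)))
              else none) ++
         [MForm.neg (MForm.dia 1 (MForm.conjList hd
            ((M.worldList.filter fun w => decide (M.R v w)).map fun w =>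
              MForm.neg (charF hd c M n w))))])

/-- `|U^n_{v,w}|` for the global game. -/
def USetG {d : ℕ} (c n : ℕ) (M : KModel d) (v w : M.W) : ℕ :=
  Nat.card {u : M.W // M.R v u ∧ GBisimG c n M u M w}

/-- `|J^n_w|`: the number of worlds `u` with `(M,u) ∼^∃_{n,c} (M,w)`. -/
def JSetG {d : ℕ} (c n : ℕ) (M : KModel d) (w : M.W) : ℕ :=
  Nat.card {u : M.W // GBisimG c n M u M w}

/-- The global characteristic formula `φ^{ℓ,c}_{∃[M,v]}` for GMLC. -/
def charG {d : ℕ} (hd : 0 < d) (c : ℕ) (M : KModel d) : ℕ → M.W → MForm d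
  | 0, v => atomDesc hd M v
  | n + 1, v =>
      MForm.conjList hd
        ([atomDesc hd M v] ++
         ((M.worldList.filter fun w => decide (M.R v w)).flatMap fun w =>
            ((List.range c).map (· + 1)).filterMap fun k =>
              if k ≤ min (USetG c n M v w) c then some (MForm.dia k (charG hd c M n w))
              else none) ++
         ((M.worldList.filter fun w => decide (M.R v w)).flatMap fun w =>
            ((List.range c).map (· + 1)).filterMap fun k =>
              if USetG c n M v w < k ∧ k ≤ c then
                some (MForm.neg (MForm.dia k (charG hd c M n w)))
              else none) ++
         (M.worldList.flatMap fun w =>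
            ((List.range c).map (· + 1)).filterMap fun k =>
              if k ≤ min (JSetG c n M w) c then some (MForm.glob k (charG hd c M n w))
              else none) ++
         (M.worldList.flatMap fun w =>
            ((List.range c).map (· + 1)).filterMap fun k =>
              if JSetG c n M w < k ∧ k ≤ c then
                some (MForm.neg (MForm.glob k (charG hd c M n w)))
              else none) ++
         [MForm.neg (MForm.dia 1 (MForm.conjList hd
            ((M.worldList.filter fun w => decide (M.R v w)).map fun w =>
              MForm.neg (charG hd c M n w)))),
          MForm.neg (MForm.glob 1 (MForm.conjList hd
            (M.worldList.map fun w => MForm.neg (charG hd c M n w))))])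

/-! ## Two-variable first-order logic with counting quantifiers (C²) -/

/-- C² formulas over unary predicates `p₁, …, p_d` and one binary relation `E`, with the two
variables represented by `Bool` (`false` is the distinguished free variable `x`). -/
inductive C2Form (d : ℕ) : Type
  | prop : Fin d → Bool → C2Form d
  | edge : Bool → Bool → C2Form d
  | eq : Bool → Bool → C2Form d
  | neg : C2Form d → C2Form d
  | and : C2Form d → C2Form d → C2Form d
  | exC : ℕ → Bool → C2Form d → C2Form d

namespace C2Form

/-- Quantifier depth. -/
def depth {d : ℕ} : C2Form d → ℕ
  | prop _ _ => 0
  | edge _ _ => 0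
  | eq _ _ => 0
  | neg φ => depth φ
  | and φ ψ => max (depth φ) (depth ψ)
  | exC _ _ φ => depth φ + 1

/-- Counting rank. -/
def rank {d : ℕ} : C2Form d → ℕ
  | prop _ _ => 0
  | edge _ _ => 0
  | eq _ _ => 0
  | neg φ => rank φ
  | and φ ψ => max (rank φ) (rank ψ)
  | exC k _ φ => max k (rank φ)

/-- Well-formed C² formulas: all counting indices are positive. -/
def IsC2 {d : ℕ} : C2Form d → Prop
  | prop _ _ => True
  | edge _ _ => True
  | eq _ _ => True
  | neg φ => IsC2 φ
  | and φ ψ => IsC2 φ ∧ IsC2 ψ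
  | exC k _ φ => 1 ≤ k ∧ IsC2 φ

/-- FO² formulas: all counting quantifiers are with `k = 1`, i.e. ordinary `∃`. -/
def IsFO2 {d : ℕ} : C2Form d → Prop
  | prop _ _ => True
  | edge _ _ => True
  | eq _ _ => True
  | neg φ => IsFO2 φ
  | and φ ψ => IsFO2 φ ∧ IsFO2 ψ
  | exC k _ φ => k = 1 ∧ IsFO2 φ

/-- The set of free variables of a formula. -/
def free {d : ℕ} : C2Form d → Set Bool
  | prop _ b => {b}
  | edge b₁ b₂ => {b₁, b₂}
  | eq b₁ b₂ => {b₁, b₂}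
  | neg φ => free φ
  | and φ ψ => free φ ∪ free ψ
  | exC _ b φ => free φ \ {b}

end C2Form

/-- A finite first-order structure over the signature with unary predicates `p₁, …, p_d`
and one binary relation `E`. -/
structure FOModel (d : ℕ) where
  W : Type
  fintype : Fintype W
  E : W → W → Prop
  val : W → Fin d → Prop

/-- First-order satisfaction of C² formulas under an assignment of the two variables. -/
def FOModel.sat {d : ℕ} (M : FOModel d) : (Bool → M.W) → C2Form d → Prop
  | a, C2Form.prop p b => M.val (a b) p
  | a, C2Form.edge b₁ b₂ => M.E (a b₁) (a b₂)
  | a, C2Form.eq b₁ b₂ => a b₁ = a b₂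
  | a, C2Form.neg φ => ¬ M.sat a φ
  | a, C2Form.and φ ψ => M.sat a φ ∧ M.sat a ψ
  | a, C2Form.exC k b φ => k ≤ Nat.card {w : M.W // M.sat (Function.update a b w) φ}

/-- The first-order structure associated with a node-labelled graph. -/
def LGraph.toFOModel {d : ℕ} (G : LGraph d) : FOModel d where
  W := Fin G.n
  fintype := inferInstance
  E := G.adj
  val := fun v p => G.label v p = true

/-! ## Two-pebble graded games -/

/-- The positions of the pebbles (pair 1 placed, pair 2 possibly unplaced) form a partial
isomorphism between `M` and `M'`. -/
def PIso {d : ℕ} (M M' : FOModel d) (p₁ : M.W × M'.W) (p₂ : Option (M.W × M'.W)) : Prop :=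
  ((∀ q, M.val p₁.1 q ↔ M'.val p₁.2 q) ∧ (M.E p₁.1 p₁.1 ↔ M'.E p₁.2 p₁.2)) ∧
  ∀ x ∈ p₂,
    (∀ q, M.val x.1 q ↔ M'.val x.2 q) ∧ (M.E x.1 x.1 ↔ M'.E x.2 x.2) ∧
    (p₁.1 = x.1 ↔ p₁.2 = x.2) ∧
    (M.E p₁.1 x.1 ↔ M'.E p₁.2 x.2) ∧ (M.E x.1 p₁.1 ↔ M'.E x.2 p₁.2)

/-- Update the configuration by moving pebble pair `i` (`false` = pair 1, `true` = pair 2)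
to the given pair of worlds. -/
def updCfg {α β : Type*} (p₁ : α × β) (p₂ : Option (α × β)) :
    Bool → α × β → (α × β) × Option (α × β)
  | false, x => (x, p₂)
  | true, x => (p₁, some x)

/-- `PebbleWin c M M' ℓ p₁ p₂` holds iff Duplicator has a winning strategy in the 2-pebble
`ℓ`-round `c`-graded game from the configuration with pebble pair 1 on `p₁` and pebble pair 2
on `p₂` (if placed): she can ensure that the pebble positions always form a partial
isomorphism. -/
def PebbleWin {d : ℕ} (c : ℕ) (M M' : FOModel d) :
    (ℓ : ℕ) → M.W × M'.W → Option (M.W × M'.W) → Prop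
  | 0, p₁, p₂ => PIso M M' p₁ p₂
  | ℓ + 1, p₁, p₂ =>
      PIso M M' p₁ p₂ ∧
      ∀ i : Bool,
        (∀ U : Finset M.W, U.Nonempty → U.card ≤ c →
          ∃ U' : Finset M'.W, U'.card = U.card ∧
            ∀ u' ∈ U', ∃ u ∈ U,
              PebbleWin c M M' ℓ (updCfg p₁ p₂ i (u, u')).1 (updCfg p₁ p₂ i (u, u')).2) ∧
        (∀ U : Finset M'.W, U.Nonempty → U.card ≤ c →
          ∃ U' : Finset M.W, U'.card = U.card ∧
            ∀ u ∈ U', ∃ u' ∈ U,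
              PebbleWin c M M' ℓ (updCfg p₁ p₂ i (u, u')).1 (updCfg p₁ p₂ i (u, u')).2)

end

theorem KBounded.eq_of_mem_iff {α β : Type*} {f : Multiset α → β} (hf : KBounded 1 f)
    {M M' : Multiset α} (h : ∀ a, a ∈ M ↔ a ∈ M') : f M = f M' := by
  have cap : ∀ K : Multiset α, K.capAt 1 = (@Multiset.toFinset α (Classical.decEq α) K).val := by
    intro K
    -- Capping all multiplicities at 1 leaves exactly one copy of each member.
    let := Classical.decEq α
    have hcongr : K.capAt 1 = K.toFinset.val.bind fun a => {a} := by
      refine Multiset.bind_congr fun a ha => ?_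
      have hpos : 1 ≤ K.count a :=
        Multiset.one_le_count_iff_mem.mpr (Multiset.mem_toFinset.mp ha)
      rw [min_eq_right hpos, Multiset.replicate_one]
    rw [hcongr, Multiset.bind_singleton, Multiset.map_id']
  rw [hf M, hf M', cap, cap]
  congr 2
  ext a
  simp [h a]

theorem GBisim.of_succ {d c : ℕ} {M M' : KModel d} :
    ∀ {ℓ : ℕ} {v : M.W} {v' : M'.W}, GBisim c (ℓ + 1) M v M' v' → GBisim c ℓ M v M' v'
  | 0, _, _, h => h.1
  | ℓ + 1, _, _, h => by
    refine ⟨h.1, fun U hne hc hR => ?_, fun U hne hc hR => ?_⟩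
    · obtain ⟨U₂, hcard, hR₂, hU₂⟩ := h.2.1 U hne hc hR
      refine ⟨U₂, hcard, hR₂, fun u₂ hu₂ => ?_⟩
      obtain ⟨u₁, hu₁, hb⟩ := hU₂ u₂ hu₂
      exact ⟨u₁, hu₁, hb.of_succ⟩
    · obtain ⟨U₂, hcard, hR₂, hU₂⟩ := h.2.2 U hne hc hR
      refine ⟨U₂, hcard, hR₂, fun u₂ hu₂ => ?_⟩
      obtain ⟨u₁, hu₁, hb⟩ := hU₂ u₂ hu₂
      exact ⟨u₁, hu₁, hb.of_succ⟩

/-- For grade `1`, Spoiler's moves are singletons, which gives the usual forth condition. -/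
theorem GBisim.forth {d ℓ : ℕ} {M M' : KModel d} {v : M.W} {v' : M'.W}
    (h : GBisim 1 (ℓ + 1) M v M' v') {u : M.W} (hu : M.R v u) :
    ∃ u', M'.R v' u' ∧ GBisim 1 ℓ M u M' u' := by
  obtain ⟨U₂, hcard, hR, hU₂⟩ := h.2.1 {u} (Finset.singleton_nonempty u) (by simp) (by simpa)
  obtain ⟨u', hu'⟩ : U₂.Nonempty := Finset.card_pos.mp (by simp [hcard])
  obtain ⟨w, hw, hb⟩ := hU₂ u' hu'
  rw [Finset.mem_singleton] at hw
  exact ⟨u', hR u' hu', hw ▸ hb⟩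

/-- For grade `1`, Spoiler's moves are singletons, which gives the usual back condition. -/
theorem GBisim.back {d ℓ : ℕ} {M M' : KModel d} {v : M.W} {v' : M'.W}
    (h : GBisim 1 (ℓ + 1) M v M' v') {u' : M'.W} (hu' : M'.R v' u') :
    ∃ u, M.R v u ∧ GBisim 1 ℓ M u M' u' := by
  obtain ⟨U₂, hcard, hR, hU₂⟩ := h.2.2 {u'} (Finset.singleton_nonempty u') (by simp) (by simpa)
  obtain ⟨u, hu⟩ : U₂.Nonempty := Finset.card_pos.mp (by simp [hcard])
  obtain ⟨w, hw, hb⟩ := hU₂ u hu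
  rw [Finset.mem_singleton] at hw
  exact ⟨u, hR u hu, hw ▸ hb⟩

theorem GNN.labelAt_eq_of_gBisim {d : ℕ} (N : GNN d) (hkind : N.kind = GNNKind.AC)
    (hset : ∀ (ℓ : ℕ) (h : ℓ < N.L), KBounded 1 (N.layer ℓ h).agg) (G₁ G₂ : LGraph d) :
    ∀ (ℓ : ℕ) (v₁ : Fin G₁.n) (v₂ : Fin G₂.n),
      GBisim 1 ℓ (LGraph.toKModel G₁) v₁ (LGraph.toKModel G₂) v₂ →
      N.labelAt G₁ ℓ v₁ = N.labelAt G₂ ℓ v₂ := by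
  intro ℓ
  induction ℓ with
  | zero =>
    intro v₁ v₂ h
    funext i
    have hi : G₁.label v₁ (Fin.cast N.dims_zero i) = true ↔
        G₂.label v₂ (Fin.cast N.dims_zero i) = true := h _
    simp only [GNN.labelAt, hi]
  | succ ℓ ih =>
    intro v₁ v₂ h
    -- An `AC` layer feeds the empty multiset to `aux`, so that argument is constant.
    have haux₁ : N.auxSet G₁ v₁ = ∅ := by simp only [GNN.auxSet, hkind]
    have haux₂ : N.auxSet G₂ v₂ = ∅ := by simp only [GNN.auxSet, hkind]
    by_cases hℓ : ℓ < N.L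
    · have hagg : (N.layer ℓ hℓ).agg ((G₁.nbrs v₁).val.map fun w => N.labelAt G₁ ℓ w) =
          (N.layer ℓ hℓ).agg ((G₂.nbrs v₂).val.map fun w => N.labelAt G₂ ℓ w) := by
        refine (hset ℓ hℓ).eq_of_mem_iff fun a => ?_
        simp only [Multiset.mem_map, Finset.mem_val, LGraph.nbrs, Finset.mem_filter,
          Finset.mem_univ, true_and]
        constructor
        · rintro ⟨u, hu, rfl⟩
          obtain ⟨u', hu', hb⟩ := h.forth (u := u) hu
          exact ⟨u', hu', (ih u u' hb).symm⟩
        · rintro ⟨u', hu', rfl⟩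
          obtain ⟨u, hu, hb⟩ := h.back (u' := u') hu'
          exact ⟨u, hu, ih u u' hb⟩
      simp only [GNN.labelAt, dif_pos hℓ]
      rw [hagg, ih v₁ v₂ h.of_succ, haux₁, haux₂]
      simp
    · simp only [GNN.labelAt, dif_neg hℓ]

/-- Every GNN classifier `N` in `GNN_s^AC` (set-based aggregations) with `L`
layers is invariant under `∼_{L,1}`: if `(G₁,v₁) ∼_{L,1} (G₂,v₂)` for pointed graphs, then
`N(G₁,v₁) = N(G₂,v₂)`. -/
theorem gnn_s_ac_invariant :
    ∀ (d : ℕ) (N : GNN d),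
      N.kind = GNNKind.AC →
      (∀ (ℓ : ℕ) (h : ℓ < N.L), KBounded 1 (N.layer ℓ h).agg) →
      ∀ (G₁ G₂ : LGraph d) (v₁ : Fin G₁.n) (v₂ : Fin G₂.n),
        GBisim 1 N.L (LGraph.toKModel G₁) v₁ (LGraph.toKModel G₂) v₂ →
        N.eval G₁ v₁ = N.eval G₂ v₂ := by
  intro d N hkind hset G₁ G₂ v₁ v₂ h
  rw [GNN.eval, GNN.eval, N.labelAt_eq_of_gBisim hkind hset G₁ G₂ N.L v₁ v₂ h]
end

section
/- GML ≡ GNN_b^AC and ML ≡ GNN_s^AC: every GML (resp. ML) logic classifier has an equivalent GNN classifier in GNN_b^AC (resp. GNN_s^AC), and conversely every GNN classifier in GNN_b^AC (resp. GNN_s^AC) has an equivalent GML (resp. ML) logic classifier. -/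
/-! Both equivalences factor through *`c`-graded types of depth `n`*: the type of depth `0` of a
node is its label, and the type of depth `n + 1` consists of the type of depth `n` together with
the number, capped at `c`, of neighbours realising each type of depth `n`.  For fixed `c`, `d`, `n`
there are only finitely many types (`finite_NType`), and ML is exactly the fragment of GML of
counting rank at most `1` (`MForm.isML_iff`), so it suffices to treat GML of rank at most `c`
against AC networks with `c`-bounded aggregation, uniformly in `c`.

* A formula of rank at most `c` and depth at most `n` only depends on the type of depth `n`
  (`sat_factors`), because a threshold `k ≤ c` on a sum of counts can be tested on the capped
  counts (`min_sum_min`).  An AC network whose aggregation counts the neighbours of each type up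
  to `c` computes an injective real encoding of the type (`labelAt_typeGNN`).
* Conversely, the label computed by a `c`-bounded AC network after `ℓ` layers only depends on the
  type of depth `ℓ` (`labelAt_factors`), again by `min_sum_min`.  Every type is described by a
  formula of rank at most `c`, hence so is every set of types (`definable_type_pred`). -/

attribute [local instance] Classical.propDecidable

/-! ### Capped multiplicities -/

theorem min_sum_min {ι : Type*} (S : Finset ι) (a : ι → ℕ) (c : ℕ) :
    min (∑ s ∈ S, min (a s) c) c = min (∑ s ∈ S, a s) c := by
  induction S using Finset.induction_on with
  | empty => simp
  | insert x S hx ih =>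
    rw [Finset.sum_insert hx, Finset.sum_insert hx]
    omega

theorem count_capAt {α : Type*} [inst : DecidableEq α] (k : ℕ) (M : Multiset α) (a : α) :
    (M.capAt k).count a = min (M.count a) k := by
  obtain rfl : inst = Classical.decEq α := Subsingleton.elim _ _
  rw [Multiset.capAt]
  rw [Multiset.count_bind]
  change (∑ b ∈ M.toFinset, _) = _
  simp only [Multiset.count_replicate]
  rw [Finset.sum_ite_eq']
  by_cases h : a ∈ M
  · simp [h]
  · simp [h]

theorem capAt_capAt {α : Type*} {k c : ℕ} (h : k ≤ c) (M : Multiset α) :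
    (M.capAt c).capAt k = M.capAt k := by
  ext a
  simp only [count_capAt]
  omega

theorem KBounded.mono {α β : Type*} {k c : ℕ} {f : Multiset α → β} (hf : KBounded k f)
    (h : k ≤ c) : KBounded c f := by
  intro M
  rw [hf M, hf (M.capAt c), capAt_capAt h]

theorem count_map_eq_sum {α β : Type*} [Fintype α] (F : α → β) (X : Multiset α) (y : β) :
    (X.map F).count y = ∑ s ∈ Finset.univ.filter (fun s => F s = y), X.count s := by
  induction X using Multiset.induction_on with
  | empty => simp
  | cons x X ih =>
    simp only [Multiset.map_cons, Multiset.count_cons, ih, Finset.sum_add_distrib,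
      Finset.sum_ite_eq', Finset.mem_filter, Finset.mem_univ, true_and]
    simp only [eq_comm]

/-- A `c`-bounded function of the image of a multiset only depends on the multiplicities, capped
at `c`, in the original multiset. -/
theorem KBounded.map_congr {α β γ : Type*} [Finite α] {c : ℕ} {f : Multiset β → γ}
    (hf : KBounded c f) (F : α → β) {X Y : Multiset α}
    (h : ∀ s, min (X.count s) c = min (Y.count s) c) : f (X.map F) = f (Y.map F) := by
  have := Fintype.ofFinite α
  rw [hf (X.map F), hf (Y.map F)]
  congr 1
  ext y
  rw [count_capAt, count_capAt, count_map_eq_sum, count_map_eq_sum, ← min_sum_min]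
  simp only [h]
  rw [min_sum_min]

/-! ### Graded types -/

/-- The `c`-graded types of depth `n` for labels of dimension `d`. -/
def NType (c d : ℕ) : ℕ → Type
  | 0 => Fin d → Bool
  | n + 1 => NType c d n × (NType c d n → Fin (c + 1))

instance finite_NType (c d n : ℕ) : Finite (NType c d n) := by
  induction n with
  | zero => exact inferInstanceAs (Finite (Fin d → Bool))
  | succ n ih => exact inferInstanceAs (Finite (NType c d n × (NType c d n → Fin (c + 1))))

noncomputable instance fintype_NType (c d n : ℕ) : Fintype (NType c d n) := Fintype.ofFinite _

instance nonempty_NType (c d n : ℕ) : Nonempty (NType c d n) := by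
  induction n with
  | zero => exact ⟨fun _ => false⟩
  | succ n ih => exact ⟨(ih.some, fun _ => 0)⟩

/-- The type of depth `n` underlying a type of depth `n + 1`. -/
def NType.base {c d n : ℕ} (t : NType c d (n + 1)) : NType c d n := t.1

/-- The capped number of neighbours of each type of depth `n` prescribed by a type of depth
`n + 1`. -/
def NType.cnt {c d n : ℕ} (t : NType c d (n + 1)) : NType c d n → Fin (c + 1) := t.2

theorem NType.succ_ext_iff {c d n : ℕ} {s t : NType c d (n + 1)} :
    s = t ↔ s.base = t.base ∧ ∀ r, s.cnt r = t.cnt r :=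
  Prod.ext_iff.trans (and_congr Iff.rfl funext_iff)

/-- The `c`-graded type of depth `n` realised by a node of a graph. -/
noncomputable def LGraph.tp {d : ℕ} (c : ℕ) (G : LGraph d) : (n : ℕ) → Fin G.n → NType c d n
  | 0 => G.label
  | n + 1 => fun v => (G.tp c n v, fun s =>
      ⟨min (((G.nbrs v).val.map fun w => G.tp c n w).count s) c, by omega⟩)

/-- The number of neighbours of `v` whose type of depth `n` is `s`. -/
noncomputable def LGraph.nbrCount {d : ℕ} (c : ℕ) (G : LGraph d) (n : ℕ) (v : Fin G.n)
    (s : NType c d n) : ℕ :=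
  ((G.nbrs v).val.map fun w => G.tp c n w).count s

theorem LGraph.tp_succ_fst {d : ℕ} (c : ℕ) (G : LGraph d) (n : ℕ) (v : Fin G.n) :
    (G.tp c (n + 1) v).base = G.tp c n v := rfl

theorem LGraph.tp_succ_snd {d : ℕ} (c : ℕ) (G : LGraph d) (n : ℕ) (v : Fin G.n)
    (s : NType c d n) : ((G.tp c (n + 1) v).cnt s : ℕ) = min (G.nbrCount c n v s) c := rfl

/-- Counting the neighbours whose type satisfies `f`, as in the semantics of `◇_k`. -/
theorem card_nbrs_type {d : ℕ} (c : ℕ) (G : LGraph d) (n : ℕ) (v : Fin G.n)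
    (f : NType c d n → Prop) :
    Nat.card {w : Fin G.n // G.adj v w ∧ f (G.tp c n w)} =
      ∑ s ∈ Finset.univ.filter f, G.nbrCount c n v s := by
  have h1 : Nat.card {w : Fin G.n // G.adj v w ∧ f (G.tp c n w)} =
      ((G.nbrs v).filter fun w => f (G.tp c n w)).card := by
    rw [Nat.card_eq_fintype_card, Fintype.card_subtype, LGraph.nbrs, Finset.filter_filter]
  rw [h1, Finset.card_eq_sum_card_fiberwise (f := fun w => G.tp c n w)
    (t := Finset.univ.filter f) (by intro w hw; simpa using (Finset.mem_filter.1 hw).2)]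
  refine Finset.sum_congr rfl fun s hs => ?_
  rw [LGraph.nbrCount, Multiset.count_map, Finset.filter_filter]
  change _ = ((G.nbrs v).filter fun w => s = G.tp c n w).card
  congr 1
  ext w
  have hs' : f s := (Finset.mem_filter.1 hs).2
  simp only [Finset.mem_filter]
  constructor
  · rintro ⟨h, -, h'⟩
    exact ⟨h, h'.symm⟩
  · rintro ⟨h, rfl⟩
    exact ⟨h, hs', rfl⟩

/-! ### Formulas only depend on types -/

theorem MForm.isML_iff {d : ℕ} (φ : MForm d) : φ.IsML ↔ φ.IsGML ∧ φ.rank ≤ 1 := by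
  induction φ with
  | prop p => simp [IsML, IsGML, rank]
  | neg φ ih => simpa [IsML, IsGML, rank] using ih
  | and φ ψ ih1 ih2 => simp only [IsML, IsGML, rank, ih1, ih2, max_le_iff]; tauto
  | dia k φ ih =>
    simp only [IsML, IsGML, rank, ih, max_le_iff]
    constructor
    · rintro ⟨rfl, h, h'⟩
      exact ⟨⟨le_rfl, h⟩, le_rfl, h'⟩
    · rintro ⟨⟨h1, h⟩, h2, h'⟩
      exact ⟨le_antisymm h2 h1, h, h'⟩
  | glob k φ _ => simp [IsML, IsGML]

theorem label_factors (c d n : ℕ) : ∃ f : NType c d n → Fin d → Bool,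
    ∀ (G : LGraph d) (v : Fin G.n), G.label v = f (G.tp c n v) := by
  induction n with
  | zero => exact ⟨id, fun _ _ => rfl⟩
  | succ n ih =>
    obtain ⟨f, hf⟩ := ih
    exact ⟨fun t => f t.base, fun G v => hf G v⟩

theorem sat_factors {d : ℕ} (c : ℕ) (φ : MForm d) : φ.IsGML → φ.rank ≤ c →
    ∀ n, φ.depth ≤ n → ∃ f : NType c d n → Prop,
      ∀ (G : LGraph d) (v : Fin G.n), G.toKModel.sat v φ ↔ f (G.tp c n v) := by
  induction φ with
  | prop p =>
    intro _ _ n _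
    obtain ⟨f, hf⟩ := label_factors c d n
    exact ⟨fun t => f t p = true, fun G v => by
      have h := congrFun (hf G v) p
      change G.label v p = true ↔ _
      rw [h]⟩
  | neg φ ih =>
    intro h hr n hn
    obtain ⟨f, hf⟩ := ih h hr n hn
    exact ⟨fun t => ¬ f t, fun G v => not_congr (hf G v)⟩
  | and φ ψ ih1 ih2 =>
    intro h hr n hn
    obtain ⟨f, hf⟩ := ih1 h.1 (le_trans (le_max_left _ _) hr) n (le_trans (le_max_left _ _) hn)
    obtain ⟨g, hg⟩ := ih2 h.2 (le_trans (le_max_right _ _) hr) n (le_trans (le_max_right _ _) hn)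
    exact ⟨fun t => f t ∧ g t, fun G v => and_congr (hf G v) (hg G v)⟩
  | dia k φ ih =>
    intro h hr n hn
    have hk : k ≤ c := le_trans (le_max_left _ _) hr
    obtain _ | n := n
    · simp [MForm.depth] at hn
    obtain ⟨f, hf⟩ := ih h.2 (le_trans (le_max_right _ _) hr) n (Nat.le_of_succ_le_succ hn)
    refine ⟨fun t => k ≤ ∑ s ∈ Finset.univ.filter f, (t.cnt s : ℕ), fun G v => ?_⟩
    have h1 : G.toKModel.sat v (MForm.dia k φ) ↔
        k ≤ Nat.card {w : Fin G.n // G.adj v w ∧ f (G.tp c n w)} := by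
      simp only [← hf]
      rfl
    rw [h1, card_nbrs_type]
    simp only [LGraph.tp_succ_snd]
    have := min_sum_min (Finset.univ.filter f) (G.nbrCount c n v) c
    omega
  | glob k φ _ => exact fun h => h.elim

/-! ### Sets of types are definable -/

/-- The property `P` of pointed graphs is expressed by a GML formula of rank at most `c`. -/
def Definable {d : ℕ} (c : ℕ) (P : (G : LGraph d) → Fin G.n → Prop) : Prop :=
  ∃ φ : MForm d, φ.IsGML ∧ φ.rank ≤ c ∧ ∀ (G : LGraph d) (v : Fin G.n),
    P G v ↔ G.toKModel.sat v φ

namespace Definable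

variable {d c : ℕ} {P Q : (G : LGraph d) → Fin G.n → Prop}

theorem congr (h : Definable c P) (hPQ : ∀ G v, Q G v ↔ P G v) : Definable c Q := by
  obtain ⟨φ, h1, h2, h3⟩ := h
  exact ⟨φ, h1, h2, fun G v => (hPQ G v).trans (h3 G v)⟩

theorem neg (h : Definable c P) : Definable c fun G v => ¬ P G v := by
  obtain ⟨φ, h1, h2, h3⟩ := h
  exact ⟨φ.neg, h1, h2, fun G v => not_congr (h3 G v)⟩

theorem and (h : Definable c P) (h' : Definable c Q) : Definable c fun G v => P G v ∧ Q G v := by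
  obtain ⟨φ, h1, h2, h3⟩ := h
  obtain ⟨ψ, h1', h2', h3'⟩ := h'
  exact ⟨φ.and ψ, ⟨h1, h1'⟩, max_le h2 h2', fun G v => and_congr (h3 G v) (h3' G v)⟩

theorem const (hd : 0 < d) (p : Prop) : Definable (d := d) c fun _ _ => p := by
  have ht : Definable (d := d) c fun _ _ => True :=
    ⟨MForm.top hd, ⟨trivial, trivial⟩, by simp [MForm.top, MForm.rank],
      fun G v => by simp [MForm.top, KModel.sat]⟩
  by_cases hp : p
  · exact ht.congr fun _ _ => by simp [hp]
  · exact ht.neg.congr fun _ _ => by simp [hp]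

theorem iff_const (h : Definable c P) (p : Prop) : Definable c fun G v => (P G v ↔ p) := by
  by_cases hp : p
  · exact h.congr fun _ _ => by simp [hp]
  · exact h.neg.congr fun _ _ => by simp [hp]

theorem forall_fintype (hd : 0 < d) {ι : Type*} [Fintype ι]
    {R : ι → (G : LGraph d) → Fin G.n → Prop} (h : ∀ i, Definable c (R i)) :
    Definable c fun G v => ∀ i, R i G v := by
  have key : ∀ S : Finset ι, Definable c fun G v => ∀ i ∈ S, R i G v := by
    intro S
    induction S using Finset.induction_on with
    | empty => exact (const hd True).congr fun _ _ => by simp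
    | insert x S hx ih => exact ((h x).and ih).congr fun _ _ => by simp
  exact (key Finset.univ).congr fun _ _ => by simp

theorem dia (h : Definable c P) {k : ℕ} (hk : 1 ≤ k) (hkc : k ≤ c) :
    Definable c fun G v => k ≤ Nat.card {w : Fin G.n // G.adj v w ∧ P G w} := by
  obtain ⟨φ, h1, h2, h3⟩ := h
  refine ⟨φ.dia k, ⟨hk, h1⟩, max_le hkc h2, fun G v => ?_⟩
  simp only [h3]
  rfl

end Definable

theorem definable_type_eq {d : ℕ} (c : ℕ) (hd : 0 < d) (n : ℕ) (t : NType c d n) :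
    Definable (d := d) c fun G v => G.tp c n v = t := by
  induction n with
  | zero =>
    have hp : ∀ p : Fin d, Definable (d := d) c fun G v => (G.label v p = true ↔ t p = true) :=
      fun p => Definable.iff_const
        ⟨MForm.prop p, trivial, Nat.zero_le _, fun G v => Iff.rfl⟩ _
    refine (Definable.forall_fintype hd hp).congr fun G v => ?_
    exact funext_iff.trans (forall_congr' fun p => Bool.eq_iff_iff)
  | succ n ih =>
    -- Capped counts are equal iff they exceed the same thresholds `k + 1` with `k < c`.
    have hk : ∀ (s : NType c d n) (k : Fin c), Definable (d := d) c fun G v =>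
        ((k : ℕ) + 1 ≤ Nat.card {w : Fin G.n // G.adj v w ∧ G.tp c n w = s} ↔
          (k : ℕ) + 1 ≤ (t.cnt s : ℕ)) :=
      fun s k => ((ih s).dia (by omega) (by omega)).iff_const _
    refine ((ih t.base).and (Definable.forall_fintype hd fun s =>
      Definable.forall_fintype hd (hk s))).congr fun G v => ?_
    rw [NType.succ_ext_iff, LGraph.tp_succ_fst]
    refine and_congr Iff.rfl (forall_congr' fun s => ?_)
    rw [card_nbrs_type c G n v (fun r => r = s), Fin.ext_iff, LGraph.tp_succ_snd]
    have hs : Finset.univ.filter (fun r : NType c d n => r = s) = {s} := by ext; simp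
    rw [hs, Finset.sum_singleton]
    have hlt := (t.cnt s).isLt
    constructor
    · intro h k
      have := k.isLt
      omega
    · intro h
      by_contra hne
      rcases Nat.lt_or_gt_of_ne hne with h' | h'
      · have := h ⟨min (G.nbrCount c n v s) c, by omega⟩
        simp only at this
        omega
      · have := h ⟨(t.cnt s : ℕ), by omega⟩
        simp only at this
        omega

theorem definable_type_pred {d : ℕ} (c : ℕ) (hd : 0 < d) (n : ℕ) (f : NType c d n → Prop) :
    Definable (d := d) c fun G v => f (G.tp c n v) := by
  have h : ∀ t : {t // ¬ f t}, Definable (d := d) c fun G v => ¬ G.tp c n v = t :=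
    fun t => (definable_type_eq c hd n t).neg
  refine (Definable.forall_fintype hd h).congr fun G v => ?_
  constructor
  · intro hf t ht
    exact t.2 (ht ▸ hf)
  · intro hf
    by_contra hn
    exact hf ⟨_, hn⟩ rfl

/-! ### Bounded networks only depend on types -/

/-- The canonical multiset of neighbour types described by capped counts. -/
noncomputable def canonMultiset {c d n : ℕ} (g : NType c d n → Fin (c + 1)) :
    Multiset (NType c d n) :=
  ∑ s, Multiset.replicate (g s) s

theorem count_canonMultiset {c d n : ℕ} (g : NType c d n → Fin (c + 1)) (s : NType c d n) :
    (canonMultiset g).count s = g s := by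
  rw [canonMultiset, Multiset.count_sum']
  simp [Multiset.count_replicate]

theorem labelAt_factors {d : ℕ} (c : ℕ) (N : GNN d) (hN : N.kind = GNNKind.AC)
    (hb : ∀ (ℓ : ℕ) (h : ℓ < N.L), KBounded c (N.layer ℓ h).agg) (ℓ : ℕ) :
    ∃ F : NType c d ℓ → Fin (N.dims ℓ) → ℝ,
      ∀ (G : LGraph d) (v : Fin G.n), N.labelAt G ℓ v = F (G.tp c ℓ v) := by
  induction ℓ with
  | zero =>
    exact ⟨fun t i => if t (Fin.cast N.dims_zero i) = true then 1 else 0, fun G v => rfl⟩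
  | succ ℓ ih =>
    by_cases h : ℓ < N.L
    · obtain ⟨F, hF⟩ := ih
      refine ⟨fun t => (N.layer ℓ h).comb (F t.base)
        ((N.layer ℓ h).agg ((canonMultiset t.cnt).map F)) ((N.layer ℓ h).aux 0), fun G v => ?_⟩
      have haux : N.auxSet G v = ∅ := by simp [GNN.auxSet, hN]
      have hagg : (N.layer ℓ h).agg (((G.nbrs v).val.map fun w => G.tp c ℓ w).map F) =
          (N.layer ℓ h).agg ((canonMultiset (G.tp c (ℓ + 1) v).cnt).map F) := by
        refine (hb ℓ h).map_congr F fun s => ?_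
        rw [count_canonMultiset, LGraph.tp_succ_snd, LGraph.nbrCount]
        omega
      simp only [← hagg, LGraph.tp_succ_fst, Multiset.map_map]
      simp only [GNN.labelAt, h, dif_pos, haux, hF]
      rfl
    · exact ⟨fun _ _ => 0, fun G v => by simp [GNN.labelAt, h]⟩

theorem gnn_definable {d : ℕ} (c : ℕ) (hd : 0 < d) (N : GNN d) (hN : N.kind = GNNKind.AC)
    (hb : ∀ (ℓ : ℕ) (h : ℓ < N.L), KBounded c (N.layer ℓ h).agg) :
    Definable c fun G v => N.eval G v = true := by
  obtain ⟨F, hF⟩ := labelAt_factors c N hN hb N.L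
  exact (definable_type_pred c hd N.L fun t => N.cls (F t) = true).congr fun G v => by
    rw [GNN.eval, hF]

/-! ### A network computing types -/

/-- The dimensions of the type-computing network: types of positive depth are encoded by a single
real number. -/
def typeDims (d : ℕ) : ℕ → ℕ
  | 0 => d
  | _ + 1 => 1

/-- An injective map from a countable type to the reals. -/
noncomputable def realCode (α : Type) [Countable α] (a : α) : ℝ :=
  ((Countable.exists_injective_nat α).choose a : ℝ)

theorem realCode_injective (α : Type) [Countable α] : Function.Injective (realCode α) :=
  Nat.cast_injective.comp (Countable.exists_injective_nat α).choose_spec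

/-- The encoding of types as label vectors; at depth `0` it is forced by the initial labelling of
a network. -/
noncomputable def typeCode (c d : ℕ) : (n : ℕ) → NType c d n → Fin (typeDims d n) → ℝ
  | 0 => fun t i => if t i = true then 1 else 0
  | n + 1 => fun t _ => realCode (NType c d (n + 1)) t

theorem typeCode_injective (c d n : ℕ) : Function.Injective (typeCode c d n) := by
  cases n with
  | zero =>
    intro s t h
    funext i
    have hi : (if s i = true then (1 : ℝ) else 0) = if t i = true then 1 else 0 := congrFun h i
    by_cases hs : s i = true <;> by_cases ht : t i = true <;> simp_all
  | succ n =>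
    intro s t h
    exact realCode_injective _ (congrFun h (0 : Fin 1))

/-- The vector of multiplicities, capped at `c`, of the codes of the types of depth `n`. -/
noncomputable def codeCounts (c d n : ℕ) (M : Multiset (Fin (typeDims d n) → ℝ)) :
    NType c d n → Fin (c + 1) :=
  fun s => ⟨min (M.count (typeCode c d n s)) c, by omega⟩

theorem codeCounts_capAt (c d n : ℕ) (M : Multiset (Fin (typeDims d n) → ℝ)) :
    codeCounts c d n (M.capAt c) = codeCounts c d n M := by
  funext s
  simp only [codeCounts, count_capAt, Fin.mk.injEq]
  omega

/-- The AC network with `n` layers that computes the code of the type of depth `n` and accepts if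
this type satisfies `f`. -/
noncomputable def typeGNN (c d n : ℕ) (f : NType c d n → Prop) : GNN d where
  kind := GNNKind.AC
  L := n
  dims := typeDims d
  dims_zero := rfl
  layer := fun ℓ _ =>
    { m₁ := 1
      m₂ := 0
      agg := fun M _ => realCode (NType c d ℓ → Fin (c + 1)) (codeCounts c d ℓ M)
      aux := fun _ _ => 0
      comb := fun x a _ => typeCode c d (ℓ + 1)
        (Function.invFun (typeCode c d ℓ) x, Function.invFun (realCode _) (a 0)) }
  cls := fun x => decide (f (Function.invFun (typeCode c d n) x))

theorem typeGNN_bounded (c d n : ℕ) (f : NType c d n → Prop) (ℓ : ℕ) (h : ℓ < n) :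
    KBounded c ((typeGNN c d n f).layer ℓ h).agg := by
  intro M
  exact congrArg (fun g _ => realCode (NType c d ℓ → Fin (c + 1)) g)
    (codeCounts_capAt c d ℓ M).symm

theorem labelAt_typeGNN (c d n : ℕ) (f : NType c d n → Prop) (G : LGraph d) (ℓ : ℕ)
    (hℓ : ℓ ≤ n) (v : Fin G.n) :
    (typeGNN c d n f).labelAt G ℓ v = typeCode c d ℓ (G.tp c ℓ v) := by
  induction ℓ generalizing v with
  | zero => rfl
  | succ ℓ ih =>
    have h : ℓ < (typeGNN c d n f).L := hℓ
    have ih' : (typeGNN c d n f).labelAt G ℓ = fun w => typeCode c d ℓ (G.tp c ℓ w) :=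
      funext fun w => ih (by omega) w
    have hcount : codeCounts c d ℓ
        ((G.nbrs v).val.map fun w => typeCode c d ℓ (G.tp c ℓ w)) = (G.tp c (ℓ + 1) v).cnt := by
      funext s
      rw [Fin.ext_iff, LGraph.tp_succ_snd, LGraph.nbrCount,
        ← Multiset.count_map_eq_count' _ _ (typeCode_injective c d ℓ), Multiset.map_map]
      rfl
    have hstep : (typeGNN c d n f).labelAt G (ℓ + 1) v = typeCode c d (ℓ + 1)
        (Function.invFun (typeCode c d ℓ) ((typeGNN c d n f).labelAt G ℓ v),
          Function.invFun (realCode _) (realCode _ (codeCounts c d ℓ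
            ((G.nbrs v).val.map fun w => (typeGNN c d n f).labelAt G ℓ w)))) := by
      simp only [GNN.labelAt, h, dif_pos]
      rfl
    rw [hstep, ih', hcount, Function.leftInverse_invFun (typeCode_injective c d ℓ),
      Function.leftInverse_invFun (realCode_injective _)]
    rfl

theorem exists_gnn {d : ℕ} (c : ℕ) (φ : MForm d) (h : φ.IsGML) (hr : φ.rank ≤ c) :
    ∃ N : GNN d, N.kind = GNNKind.AC ∧
      (∀ (ℓ : ℕ) (h : ℓ < N.L), KBounded c (N.layer ℓ h).agg) ∧
      ∀ (G : LGraph d) (v : Fin G.n), N.eval G v = true ↔ (LGraph.toKModel G).sat v φ := by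
  obtain ⟨f, hf⟩ := sat_factors c φ h hr φ.depth le_rfl
  refine ⟨typeGNN c d φ.depth f, rfl, typeGNN_bounded c d φ.depth f, fun G v => ?_⟩
  have heval : (typeGNN c d φ.depth f).eval G v = decide (f (Function.invFun
      (typeCode c d φ.depth) ((typeGNN c d φ.depth f).labelAt G φ.depth v))) := rfl
  rw [heval, labelAt_typeGNN _ _ _ _ _ _ le_rfl,
    Function.leftInverse_invFun (typeCode_injective c d _), hf, decide_eq_true_iff]

/-- Finitely many layers with bounded aggregation have a common bound. -/
theorem exists_common_bound {d : ℕ} (N : GNN d)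
    (hb : ∀ (ℓ : ℕ) (h : ℓ < N.L), BoundedAgg (N.layer ℓ h).agg) :
    ∃ c, ∀ (ℓ : ℕ) (h : ℓ < N.L), KBounded c (N.layer ℓ h).agg := by
  choose k hk using hb
  refine ⟨Finset.univ.sup fun i : Fin N.L => k i i.isLt, fun ℓ h => (hk ℓ h).mono ?_⟩
  exact Finset.le_sup (f := fun i : Fin N.L => k i i.isLt) (Finset.mem_univ ⟨ℓ, h⟩)

/-- `GML ≡ GNN_b^AC` and `ML ≡ GNN_s^AC`: every GML (resp. ML) logic
classifier has an equivalent GNN classifier in `GNN_b^AC` (resp. `GNN_s^AC`), and conversely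
every GNN classifier in `GNN_b^AC` (resp. `GNN_s^AC`) has an equivalent GML (resp. ML) logic
classifier (for the converse directions the set of propositions must be nonempty). -/
theorem gml_equiv_gnn_b_ac_and_ml_equiv_gnn_s_ac :
    ∀ d : ℕ,
      (∀ φ : MForm d, φ.IsGML →
        ∃ N : GNN d, N.kind = GNNKind.AC ∧
          (∀ (ℓ : ℕ) (h : ℓ < N.L), BoundedAgg (N.layer ℓ h).agg) ∧
          ∀ (G : LGraph d) (v : Fin G.n),
            N.eval G v = true ↔ (LGraph.toKModel G).sat v φ) ∧
      (0 < d → ∀ N : GNN d, N.kind = GNNKind.AC →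
        (∀ (ℓ : ℕ) (h : ℓ < N.L), BoundedAgg (N.layer ℓ h).agg) →
        ∃ φ : MForm d, φ.IsGML ∧
          ∀ (G : LGraph d) (v : Fin G.n),
            N.eval G v = true ↔ (LGraph.toKModel G).sat v φ) ∧
      (∀ φ : MForm d, φ.IsML →
        ∃ N : GNN d, N.kind = GNNKind.AC ∧
          (∀ (ℓ : ℕ) (h : ℓ < N.L), KBounded 1 (N.layer ℓ h).agg) ∧
          ∀ (G : LGraph d) (v : Fin G.n),
            N.eval G v = true ↔ (LGraph.toKModel G).sat v φ) ∧
      (0 < d → ∀ N : GNN d, N.kind = GNNKind.AC →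
        (∀ (ℓ : ℕ) (h : ℓ < N.L), KBounded 1 (N.layer ℓ h).agg) →
        ∃ φ : MForm d, φ.IsML ∧
          ∀ (G : LGraph d) (v : Fin G.n),
            N.eval G v = true ↔ (LGraph.toKModel G).sat v φ) := by
  intro d
  refine ⟨fun φ h => ?_, fun hd N hN hb => ?_, fun φ h => ?_, fun hd N hN hb => ?_⟩
  · obtain ⟨N, h1, h2, h3⟩ := exists_gnn φ.rank φ h le_rfl
    exact ⟨N, h1, fun ℓ hℓ => ⟨_, h2 ℓ hℓ⟩, h3⟩
  · obtain ⟨c, hc⟩ := exists_common_bound N hb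
    obtain ⟨φ, h1, -, h3⟩ := gnn_definable c hd N hN hc
    exact ⟨φ, h1, h3⟩
  · exact exists_gnn 1 φ (φ.isML_iff.1 h).1 (φ.isML_iff.1 h).2
  · obtain ⟨φ, h1, h2, h3⟩ := gnn_definable 1 hd N hN hb
    exact ⟨φ, φ.isML_iff.2 ⟨h1, h2⟩, h3⟩
end

section
/- ML(E) ≤ GNN_s^ACR: for every classifier φ of dimension d in modal logic with the global modality (ML(E)) there exists a GNN classifier N_φ in GNN_s^ACR of dimension d such that for every pointed graph (G,v) of dimension d, N_φ(G,v) = true if and only if (M_G,v) ⊨ φ. -/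
/-!
The combination, aggregation and readout functions of a GNN are arbitrary, so one *universal*
set-based GNN suffices. Each layer keeps the old label and adds two reals: a code of the set of
labels of the neighbours, and a code of the set of labels of all nodes. Such codes exist because
`Finset (Fin n → ℝ)` has at most the cardinality of `ℝ`. As the coding is injective, no
information about these sets is lost, and a formula of modal depth at most `ℓ` depends only on the
label after `ℓ` layers (`universalGNN_decides`): `◇₁ φ` asks whether the coded set of
neighbour labels contains one satisfying the predicate for `φ`, and `∃₁ φ` asks the same of the
coded set of all labels.
-/

attribute [local instance] Classical.propDecidable

/-! ### The universal set-based GNN -/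

theorem exists_finset_code (n : ℕ) : ∃ f : Finset (Fin n → ℝ) → ℝ, Function.Injective f := by
  have h1 : Cardinal.mk (Fin n → ℝ) ≤ Cardinal.continuum := by
    rw [← Cardinal.power_def, Cardinal.mk_real, Cardinal.mk_fin]
    exact Cardinal.power_nat_le Cardinal.aleph0_le_continuum
  have h2 : Cardinal.mk (Finset (Fin n → ℝ)) ≤ Cardinal.mk ℝ := by
    refine (Cardinal.mk_le_of_injective (f := Finset.toList)
      (Function.LeftInverse.injective (g := List.toFinset) Finset.toList_toFinset)).trans ?_
    refine (Cardinal.mk_list_le_max _).trans ?_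
    rw [Cardinal.mk_real]
    exact max_le Cardinal.aleph0_le_continuum h1
  obtain ⟨e⟩ := h2
  exact ⟨e, e.injective⟩

/-- A chosen injective coding of finite sets of label vectors by reals. -/
noncomputable def finsetCode (n : ℕ) : Finset (Fin n → ℝ) → ℝ := (exists_finset_code n).choose

/-- A left inverse of `finsetCode`. -/
noncomputable def finsetDecode (n : ℕ) : ℝ → Finset (Fin n → ℝ) :=
  Function.invFun (finsetCode n)

theorem finsetDecode_code (n : ℕ) (s : Finset (Fin n → ℝ)) :
    finsetDecode n (finsetCode n s) = s :=
  Function.leftInverse_invFun (exists_finset_code n).choose_spec s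

theorem mem_capAt_one {α : Type*} (M : Multiset α) (a : α) : a ∈ M.capAt 1 ↔ a ∈ M := by
  simp only [Multiset.capAt, Multiset.mem_bind, Multiset.mem_replicate, Finset.mem_val,
    Multiset.mem_toFinset]
  constructor
  · rintro ⟨b, hb, -, rfl⟩
    exact hb
  · intro h
    have := Multiset.one_le_count_iff_mem.2 h
    exact ⟨a, h, by omega, rfl⟩

/-- The aggregation function sending a multiset to the code of its underlying set. -/
noncomputable def setAgg (n : ℕ) (M : Multiset (Fin n → ℝ)) : Fin 1 → ℝ :=
  fun _ => finsetCode n M.toFinset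

theorem setAgg_kBounded (n : ℕ) : KBounded 1 (setAgg n) := by
  intro M
  have : (M.capAt 1).toFinset = M.toFinset := by
    ext a
    simp [mem_capAt_one]
  funext _
  exact congrArg (finsetCode n) this.symm

/-- The `ACR` classifier with `L` layers, each of which prepends to a node label the codes of the
set of neighbour labels and of the set of all labels. -/
noncomputable def universalGNN (d L : ℕ) (cls : (Fin (d + 2 * L) → ℝ) → Bool) : GNN d where
  kind := GNNKind.ACR
  L := L
  dims ℓ := d + 2 * ℓ
  dims_zero := rfl
  layer ℓ _ :=
    { m₁ := 1
      m₂ := 1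
      agg := setAgg (d + 2 * ℓ)
      aux := setAgg (d + 2 * ℓ)
      comb := fun x a b =>
        (Fin.cons (a 0) (Fin.cons (b 0) x : Fin (d + 2 * ℓ + 1) → ℝ) :
          Fin (d + 2 * ℓ + 1 + 1) → ℝ) }
  cls := cls

/-- The label vectors computed by `universalGNN`, with their dimension spelled out. -/
noncomputable def universalLabel {d : ℕ} (L : ℕ) (cls : (Fin (d + 2 * L) → ℝ) → Bool)
    (G : LGraph d) (ℓ : ℕ) (v : Fin G.n) : Fin (d + 2 * ℓ) → ℝ :=
  (universalGNN d L cls).labelAt G ℓ v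

theorem universalLabel_succ {d : ℕ} (L : ℕ) (cls : (Fin (d + 2 * L) → ℝ) → Bool)
    (G : LGraph d) {ℓ : ℕ} (h : ℓ < L) (v : Fin G.n) :
    universalLabel L cls G (ℓ + 1) v =
      (Fin.cons (finsetCode _ ((G.nbrs v).val.map (universalLabel L cls G ℓ)).toFinset)
        (Fin.cons (finsetCode _
            ((Finset.univ : Finset (Fin G.n)).val.map (universalLabel L cls G ℓ)).toFinset)
          (universalLabel L cls G ℓ v) : Fin (d + 2 * ℓ + 1) → ℝ) :
        Fin (d + 2 * ℓ + 1 + 1) → ℝ) := by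
  have hL : ℓ < (universalGNN d L cls).L := h
  exact dif_pos hL

/-- A formula of depth at most `ℓ` is decided by the label after `ℓ` layers, uniformly in the
pointed graph. The predicate `P` does not depend on `cls`, so `cls` can later be defined
from `P`. -/
theorem universalGNN_decides {d : ℕ} (L : ℕ) (φ : MForm d) (hφ : φ.IsMLE) :
    ∀ ℓ, φ.depth ≤ ℓ → ℓ ≤ L → ∃ P : (Fin (d + 2 * ℓ) → ℝ) → Prop,
      ∀ cls (G : LGraph d) (v : Fin G.n),
        P (universalLabel L cls G ℓ v) ↔ G.toKModel.sat v φ := by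
  induction φ with
  | prop p =>
    intro ℓ _
    induction ℓ with
    | zero =>
      intro _
      refine ⟨fun x => x p = 1, fun cls G v => ?_⟩
      simp [universalLabel, GNN.labelAt, KModel.sat, LGraph.toKModel]
      rfl
    | succ ℓ ih =>
      intro hL
      obtain ⟨P, hP⟩ := ih (Nat.zero_le _) (by omega)
      refine ⟨fun x : Fin (d + 2 * ℓ + 1 + 1) → ℝ => P (Fin.tail (Fin.tail x)),
        fun cls G v => ?_⟩
      rw [universalLabel_succ L cls G hL]
      simpa using hP cls G v
  | neg φ ih =>
    intro ℓ h hL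
    obtain ⟨P, hP⟩ := ih hφ ℓ h hL
    exact ⟨fun x => ¬ P x, fun cls G v => not_congr (hP cls G v)⟩
  | and φ ψ ih₁ ih₂ =>
    intro ℓ h hL
    obtain ⟨P, hP⟩ := ih₁ hφ.1 ℓ ((le_max_left _ _).trans h) hL
    obtain ⟨Q, hQ⟩ := ih₂ hφ.2 ℓ ((le_max_right _ _).trans h) hL
    exact ⟨fun x => P x ∧ Q x, fun cls G v => and_congr (hP cls G v) (hQ cls G v)⟩
  | dia k φ ih =>
    intro ℓ h hL
    obtain ⟨rfl, hφ⟩ := hφ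
    obtain _ | ℓ := ℓ
    · simp [MForm.depth] at h
    obtain ⟨P, hP⟩ := ih hφ ℓ (Nat.le_of_succ_le_succ h) (by omega)
    refine ⟨fun x : Fin (d + 2 * ℓ + 1 + 1) → ℝ => ∃ y ∈ finsetDecode (d + 2 * ℓ) (x 0), P y,
      fun cls G v => ?_⟩
    change _ ↔ 1 ≤ Nat.card {w : Fin G.n // G.adj v w ∧ G.toKModel.sat w φ}
    rw [universalLabel_succ L cls G hL, Nat.one_le_iff_ne_zero, Nat.card_ne_zero]
    simp only [Fin.cons_zero, finsetDecode_code, Multiset.mem_toFinset, Multiset.mem_map,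
      exists_exists_and_eq_and, hP]
    simp [LGraph.nbrs, Subtype.finite, LGraph.toKModel]
  | glob k φ ih =>
    intro ℓ h hL
    obtain ⟨rfl, hφ⟩ := hφ
    obtain _ | ℓ := ℓ
    · simp [MForm.depth] at h
    obtain ⟨P, hP⟩ := ih hφ ℓ (Nat.le_of_succ_le_succ h) (by omega)
    refine ⟨fun x : Fin (d + 2 * ℓ + 1 + 1) → ℝ => ∃ y ∈ finsetDecode (d + 2 * ℓ) (x 1), P y,
      fun cls G v => ?_⟩
    change _ ↔ 1 ≤ Nat.card {w : Fin G.n // G.toKModel.sat w φ}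
    rw [universalLabel_succ L cls G hL, Nat.one_le_iff_ne_zero, Nat.card_ne_zero]
    simp only [Fin.cons_one, Fin.cons_zero, finsetDecode_code, Multiset.mem_toFinset,
      Multiset.mem_map, exists_exists_and_eq_and, hP]
    simp [Subtype.finite, LGraph.toKModel]

/-- `ML(E) ≤ GNN_s^ACR`: for every classifier `φ` of dimension `d` in modal
logic with the global modality there exists a GNN classifier `N_φ` in `GNN_s^ACR` (set-based,
i.e. `1`-bounded, aggregation and readout) of dimension `d` such that for every pointed graph
`(G,v)` of dimension `d`, `N_φ(G,v) = true` iff `(M_G,v) ⊨ φ`. -/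
theorem mle_le_gnn_s_acr :
    ∀ (d : ℕ) (φ : MForm d), φ.IsMLE →
      ∃ N : GNN d, N.kind = GNNKind.ACR ∧
        (∀ (ℓ : ℕ) (h : ℓ < N.L),
          KBounded 1 (N.layer ℓ h).agg ∧ KBounded 1 (N.layer ℓ h).aux) ∧
        ∀ (G : LGraph d) (v : Fin G.n),
          N.eval G v = true ↔ (LGraph.toKModel G).sat v φ := by
  intro d φ hφ
  obtain ⟨P, hP⟩ := universalGNN_decides φ.depth φ hφ φ.depth le_rfl le_rfl
  refine ⟨universalGNN d φ.depth fun x => decide (P x), rfl,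
    fun ℓ _ => ⟨setAgg_kBounded _, setAgg_kBounded _⟩, fun G v => ?_⟩
  rw [← hP (fun x => decide (P x)) G v]
  exact decide_eq_true_iff
end
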